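/- Let d, w_1,…,w_n be positive integers such that w_i divides d for all i = 1,…,n, and let f:(ℂ^n,0)→(ℂ,0) be a weighted homogeneous polynomial of degree d with respect to w = (w_1,…,w_n) with an isolated singularity at the origin. Then there exists an analytic change of coordinates 𝐱 in (ℂ^n,0) of the form x_i = y_i + h_i(y_1,…,y_n), with each h_i a polynomial, such that: (1) f∘𝐱 is convenient; and (2) whenever h_i ≠ 0, the polynomial h_i is weighted homogeneous of degree w_i with respect to w, so that f∘𝐱 is again weighted homogeneous of degree d with respect to w. -/

import Mathlib

open Filter Topology

/-- `g` has a singular point at the origin which is isolated: the gradient of `g` vanishes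
at `0` and at no nearby point `≠ 0`. -/
def IsolatedSing {E : Type*} [NormedAddCommGroup E] [NormedSpace ℂ E] (g : E → ℂ) : Prop :=
  fderiv ℂ g 0 = 0 ∧ ∀ᶠ x in 𝓝[≠] (0 : E), fderiv ℂ g x ≠ 0

open MvPolynomial in
lemma exists_single_mem_support {n : ℕ} (P : MvPolynomial (Fin n) ℂ) (i : Fin n) (t : ℂ)
    (h : eval (Pi.single i t) P ≠ 0) : ∃ m : ℕ, Finsupp.single i m ∈ P.support := by
  rw [eval_eq] at h
  obtain ⟨k, hk, hne⟩ := Finset.exists_ne_zero_of_sum_ne_zero h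
  refine ⟨k i, ?_⟩
  have : Finsupp.single i (k i) = k := by
    ext j
    by_cases hj : j = i
    · subst hj; simp
    · rw [Finsupp.single_eq_of_ne hj]
      by_contra hkj
      apply hne
      have hkj' : k j ≠ 0 := fun h => hkj h.symm
      have : ∏ l ∈ k.support, (Pi.single i t : Fin n → ℂ) l ^ k l = 0 :=
        Finset.prod_eq_zero (i := j) (by simpa using hkj') (by simp [hj, hkj'])
      rw [this, mul_zero]
  rw [this]; exact hk

open MvPolynomial in
lemma hasFDerivAt_eval_mv {n : ℕ} (P : MvPolynomial (Fin n) ℂ) (x : Fin n → ℂ) :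
    HasFDerivAt (fun y : Fin n → ℂ => eval y P)
      (∑ j, eval x (pderiv j P) • (ContinuousLinearMap.proj j : (Fin n → ℂ) →L[ℂ] ℂ)) x := by
  induction P using MvPolynomial.induction_on with
  | C a =>
    simp only [eval_C]
    refine (hasFDerivAt_const (𝕜 := ℂ) a x).congr_fderiv ?_
    ext v
    simp
  | add p q hp hq =>
    simp only [map_add]
    refine (hp.add hq).congr_fderiv ?_
    ext v
    simp [add_mul, Finset.sum_add_distrib]
  | mul_X p i hp =>
    simp only [map_mul, eval_X]
    have h1 : HasFDerivAt (fun y : Fin n → ℂ => y i)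
      (ContinuousLinearMap.proj i : (Fin n → ℂ) →L[ℂ] ℂ) x :=
      (ContinuousLinearMap.proj i : (Fin n → ℂ) →L[ℂ] ℂ).hasFDerivAt
    refine (hp.mul h1).congr_fderiv ?_
    ext v
    simp [pderiv_X, Pi.single_apply, add_mul, Finset.sum_add_distrib, Finset.mul_sum,
      apply_ite, ite_mul]
    exact Finset.sum_congr rfl fun _ _ => by ring

open MvPolynomial in
lemma bind₁_wh {n d : ℕ} (w : Fin n → ℕ) (f : MvPolynomial (Fin n) ℂ)
    (hf : IsWeightedHomogeneous w f d) (g : Fin n → MvPolynomial (Fin n) ℂ)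
    (hg : ∀ i, IsWeightedHomogeneous w (g i) (w i)) :
    IsWeightedHomogeneous w (bind₁ g f) d := by
  rw [f.as_sum, map_sum]
  refine IsWeightedHomogeneous.sum _ _ _ fun k hk => ?_
  rw [bind₁_monomial]
  refine IsWeightedHomogeneous.C_mul ?_ _
  have hk' := hf (mem_support_iff.mp hk)
  have := IsWeightedHomogeneous.prod k.support (fun i => g i ^ k i) (fun i => k i • w i)
    (fun i _ => (hg i).pow _)
  rw [← hk', Finsupp.weight_apply]
  exact this

/-- Proposition `wMatchEntero`: let `d, w_1,…,w_n` be positive integers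
with `w_i ∣ d` for all `i`, and let `f` be a weighted homogeneous polynomial of degree `d`
with respect to `w` with an isolated singularity at the origin. Then there is an analytic
(polynomial) change of coordinates `𝐱`, of the form `x_i = y_i + h_i(y)` with each `h_i` a
polynomial, such that (1) `f ∘ 𝐱` is convenient (a pure power of each variable occurs in
its support), and (2) each nonzero `h_i` is weighted homogeneous of degree `w_i` with
respect to `w`, so that `f ∘ 𝐱` is again weighted homogeneous of degree `d`. -/
theorem exists_coordChange_convenient
    (n : ℕ) (d : ℕ) (hd : 0 < d) (w : Fin n → ℕ) (hw : ∀ i, 1 ≤ w i)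
    (hdvd : ∀ i, w i ∣ d)
    (f : MvPolynomial (Fin n) ℂ)
    (hwh : MvPolynomial.IsWeightedHomogeneous w f d)
    (hf0 : MvPolynomial.coeff 0 f = 0)
    (hiso : IsolatedSing fun x : Fin n → ℂ => MvPolynomial.eval x f) :
    ∃ h : Fin n → MvPolynomial (Fin n) ℂ,
      -- `𝐱 : y ↦ (y_i + h_i(y))_i` is a local (bi)analytic change of coordinates at `0`:
      (∃ U ∈ 𝓝 (0 : Fin n → ℂ),
        Set.InjOn (fun y i => MvPolynomial.eval y (MvPolynomial.X i + h i)) U) ∧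
      -- (1) `f ∘ 𝐱` is convenient:
      (∀ i : Fin n, ∃ m : ℕ,
        Finsupp.single i m ∈
          (MvPolynomial.bind₁ (fun i => MvPolynomial.X i + h i) f).support) ∧
      -- (2) each nonzero `h_i` is weighted homogeneous of degree `w_i` …
      (∀ i, h i ≠ 0 → MvPolynomial.IsWeightedHomogeneous w (h i) (w i)) ∧
      -- … and therefore `f ∘ 𝐱` is weighted homogeneous of degree `d` with respect to `w`:
      MvPolynomial.IsWeightedHomogeneous w
        (MvPolynomial.bind₁ (fun i => MvPolynomial.X i + h i) f) d := by
  classical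
  obtain ⟨-, hiso⟩ := hiso
  -- a common small parameter
  obtain ⟨t, ht0, ht⟩ : ∃ t : ℂ, t ≠ 0 ∧ ∀ i : Fin n,
      fderiv ℂ (fun x : Fin n → ℂ => MvPolynomial.eval x f) (Pi.single i t) ≠ 0 := by
    have key : ∀ᶠ t in 𝓝[≠] (0 : ℂ), ∀ i : Fin n,
        fderiv ℂ (fun x : Fin n → ℂ => MvPolynomial.eval x f) (Pi.single i t) ≠ 0 := by
      rw [eventually_all]
      intro i
      have hc : Tendsto (fun t : ℂ => (Pi.single i t : Fin n → ℂ)) (𝓝[≠] 0) (𝓝[≠] 0) := by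
        refine tendsto_nhdsWithin_iff.mpr ⟨?_, ?_⟩
        · have : Continuous (fun t : ℂ => (Pi.single i t : Fin n → ℂ)) :=
            continuous_pi fun j => by
              simp only [Pi.single_apply]
              split_ifs <;> fun_prop
          have h2 := this.tendsto 0
          rw [Pi.single_zero] at h2
          exact h2.mono_left nhdsWithin_le_nhds
        · filter_upwards [self_mem_nhdsWithin] with t ht
          simpa using ht
      exact hc.eventually hiso
    obtain ⟨t, h1, h2⟩ := (key.and self_mem_nhdsWithin).exists
    exact ⟨t, h2, h1⟩
  have hσ : ∀ i : Fin n, ∃ j : Fin n,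
      MvPolynomial.eval (Pi.single i t) (MvPolynomial.pderiv j f) ≠ 0 := by
    intro i
    by_contra! hcon
    apply ht i
    rw [(hasFDerivAt_eval_mv f _).fderiv]
    ext v
    simp [hcon]
  choose σ hσ using hσ
  have hdiv : ∀ i, w i ∣ w (σ i) := by
    intro i
    obtain ⟨m, hm⟩ := exists_single_mem_support _ i t (hσ i)
    rw [MvPolynomial.mem_support_iff, MvPolynomial.coeff_pderiv] at hm
    have h1 := hwh (left_ne_zero_of_mul hm)
    simp only [map_add, Finsupp.weight_single, smul_eq_mul, one_mul] at h1
    have h2 : w i ∣ m * w i + w (σ i) := h1 ▸ hdvd i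
    exact (Nat.dvd_add_right (Dvd.intro_left _ rfl)).mp h2
  have hpos : ∀ i, w (σ i) / w i ≠ 0 := fun i =>
    (Nat.div_pos (Nat.le_of_dvd (hw _) (hdiv i)) (hw i)).ne'
  let g : Fin n → MvPolynomial (Fin n) ℂ := fun j =>
    ∑ i ∈ Finset.univ.filter (fun i => σ i = j), MvPolynomial.X i ^ (w (σ i) / w i)
  have hg : ∀ j, MvPolynomial.IsWeightedHomogeneous w (g j) (w j) := by
    intro j
    refine MvPolynomial.IsWeightedHomogeneous.sum _ _ _ fun i hi => ?_
    have hi' : σ i = j := by simpa using hi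
    have := (MvPolynomial.isWeightedHomogeneous_X ℂ w i).pow (w (σ i) / w i)
    rw [smul_eq_mul, Nat.div_mul_cancel (hdiv i), hi'] at this
    rw [hi']
    exact this
  let G : (Fin n → ℂ) → (Fin n → ℂ) := fun y j => MvPolynomial.eval y (g j)
  have hG : ∀ i, G (Pi.single i t) = Pi.single (σ i) (t ^ (w (σ i) / w i)) := by
    intro i
    ext j
    simp only [G, g, map_sum, map_pow, MvPolynomial.eval_X]
    have hz : ∀ l, l ≠ i → (Pi.single i t : Fin n → ℂ) l ^ (w (σ l) / w l) = 0 := by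
      intro l hl
      rw [Pi.single_eq_of_ne hl, zero_pow (hpos l)]
    rw [Finset.sum_filter, Finset.sum_eq_single i]
    · by_cases h : σ i = j
      · subst h; simp
      · simp [h, Ne.symm h]
    · intro l _ hl
      simp [hz l hl]
    · simp
  have hGc : ContDiffAt ℂ 1 G 0 := by
    rw [contDiffAt_pi]
    intro j
    have : AnalyticAt ℂ (fun y : Fin n → ℂ => MvPolynomial.aeval y (g j)) 0 :=
      AnalyticAt.aeval_mvPolynomial
        (fun i => (ContinuousLinearMap.proj i : (Fin n → ℂ) →L[ℂ] ℂ).analyticAt 0) _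
    exact this.contDiffAt
  obtain ⟨K, U, hU, hK⟩ := (hGc.hasStrictFDerivAt one_ne_zero).exists_lipschitzOnWith
  have e1 : ∀ᶠ s in 𝓝[≠] (0 : ℂ), ∀ i : Fin n,
      MvPolynomial.eval (Pi.single i t + s • G (Pi.single i t)) f ≠ 0 := by
    rw [eventually_all]
    intro i
    have hl : HasDerivAt (fun s : ℂ => (Pi.single i t : Fin n → ℂ) + s • G (Pi.single i t))
        (G (Pi.single i t)) 0 := by
      simpa using ((hasDerivAt_id (0 : ℂ)).smul_const (G (Pi.single i t))).const_add
        (Pi.single i t : Fin n → ℂ)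
    have hF := hasFDerivAt_eval_mv f
      ((fun s : ℂ => (Pi.single i t : Fin n → ℂ) + s • G (Pi.single i t)) 0)
    refine (hF.comp_hasDerivAt 0 hl).eventually_ne (c := 0) ?_
    simp only [zero_smul, add_zero]
    rw [hG]
    simp [Pi.single_apply]
    exact ⟨hσ i, fun h => absurd h ht0⟩
  have e2 : ∀ᶠ s in 𝓝[≠] (0 : ℂ), ‖s‖ * K < 1 := by
    have : Continuous fun s : ℂ => ‖s‖ * (K : ℝ) := by fun_prop
    exact nhdsWithin_le_nhds (this.tendsto 0 |>.eventually_lt_const (by simp))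
  obtain ⟨s, hs1, hs2⟩ := (e1.and e2).exists
  have hh : ∀ i, MvPolynomial.IsWeightedHomogeneous w (MvPolynomial.C s * g i) (w i) :=
    fun i => (hg i).C_mul s
  refine ⟨fun i => MvPolynomial.C s * g i, ⟨U, hU, ?_⟩, ?_, fun i _ => hh i, ?_⟩
  · intro x hx y hy hxy
    have hxy' : x - y = s • (G y - G x) := by
      ext j
      have := congrFun hxy j
      simp only [map_add, map_mul, MvPolynomial.eval_X, MvPolynomial.eval_C] at this
      simp only [Pi.sub_apply, Pi.smul_apply, smul_eq_mul, G]
      linear_combination this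
    have h1 := hK.norm_sub_le hy hx
    have h2 : ‖x - y‖ ≤ ‖s‖ * K * ‖x - y‖ := by
      calc ‖x - y‖ = ‖s‖ * ‖G y - G x‖ := by rw [hxy', norm_smul]
        _ ≤ ‖s‖ * (K * ‖y - x‖) := by gcongr
        _ = ‖s‖ * K * ‖x - y‖ := by rw [norm_sub_rev y x]; ring
    have h3 : ‖x - y‖ = 0 := by
      nlinarith [norm_nonneg (x - y)]
    exact sub_eq_zero.mp (norm_eq_zero.mp h3)
  · intro i
    apply exists_single_mem_support _ i t
    have := hs1 i
    rw [← MvPolynomial.coe_aeval_eq_eval, RingHom.coe_coe, MvPolynomial.aeval_bind₁]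
    convert this using 1
    rw [← MvPolynomial.coe_aeval_eq_eval, RingHom.coe_coe]
    congr 2
    ext j
    simp [G, MvPolynomial.aeval_eq_eval]
  · exact bind₁_wh w f hwh _ fun i => (MvPolynomial.isWeightedHomogeneous_X ℂ w i).add (hh i)
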